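/- For every \(\varepsilon>0\) there is a constant \(C_{\varepsilon}>0\) such that for all integers \(k\geq 2\), \(N\geq 1\), \(r\geq 1\) and all real \(t\) (write \(T=3+|t|\)), the absolutely convergent sum \(V_{N,3}(r)=(-1)^{k}\,r^{k-it}\sum_{n\geq 1}\frac{\tau_0(n)\,\tau_{it}(nN+r)}{(nN+r)^{k}}\,H_k\Bigl(\frac{r}{nN+r}\Bigr)\) satisfies: \(|V_{N,3}(r)|\leq C_{\varepsilon}\,(rT^2)^{\varepsilon}\,\frac{r}{N}\) if \(r\geq N/(1+T^2)\), and \(|V_{N,3}(r)|\leq C_{\varepsilon}\,\Bigl(\frac{r}{2(N+r)}\Bigr)^{k}N^{\varepsilon}\) if \(r< N/(1+T^2)\). -/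

import Mathlib

/-- `τ_s(n) = ∑_{n₁ n₂ = n} (n₁/n₂)^s = n^{-s} σ_{2s}(n)` for complex `s` and `n ≥ 1`. -/
noncomputable def tauC (s : ℂ) (n : ℕ) : ℂ :=
  ∑ d ∈ n.divisors, (((d : ℂ)) / ((n / d : ℕ) : ℂ)) ^ s

/-- The Gauss hypergeometric series
`₂F₁(a,b,c;z) = Γ(c)/(Γ(a)Γ(b)) ∑_{n≥0} Γ(a+n)Γ(b+n)/Γ(c+n) zⁿ/n!` (convergent for `|z| < 1`). -/
noncomputable def hyp2F1 (a b c z : ℂ) : ℂ :=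
  Complex.Gamma c / (Complex.Gamma a * Complex.Gamma b) *
    ∑' n : ℕ, Complex.Gamma (a + n) * Complex.Gamma (b + n) / Complex.Gamma (c + n) *
      z ^ n / (n.factorial : ℂ)

/-- `H_k(w) = Γ(k-it)Γ(k+it)/Γ(2k) · ₂F₁(k+it, k-it, 2k; w)` for `0 < w < 1`. -/
noncomputable def Hfun (k : ℕ) (t : ℝ) (w : ℝ) : ℂ :=
  Complex.Gamma ((k : ℂ) - t * Complex.I) * Complex.Gamma ((k : ℂ) + t * Complex.I) /
      Complex.Gamma (2 * (k : ℂ)) *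
    hyp2F1 ((k : ℂ) + t * Complex.I) ((k : ℂ) - t * Complex.I) (2 * (k : ℂ)) (w : ℂ)

/-- The summand of `V_{N,3}(r)`, indexed over `n ≥ 1` (here `n` runs over `ℕ` via `n+1`):
`τ₀(n) τ_{it}(nN+r)/(nN+r)^k · H_k(r/(nN+r))`. -/
noncomputable def V3term (k N r : ℕ) (t : ℝ) (n : ℕ) : ℂ :=
  (((n + 1).divisors.card : ℂ)) * tauC (t * Complex.I) ((n + 1) * N + r) /
      ((((n + 1) * N + r : ℕ) : ℂ)) ^ (k : ℂ) *
    Hfun k t ((r : ℝ) / (((n + 1) * N + r : ℕ) : ℝ))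

/-- `V_{N,3}(r) = (-1)^k r^{k-it} ∑_{n≥1} τ₀(n) τ_{it}(nN+r)/(nN+r)^k H_k(r/(nN+r))`. -/
noncomputable def V3 (k N r : ℕ) (t : ℝ) : ℂ :=
  (-1 : ℂ) ^ k * ((r : ℂ)) ^ ((k : ℂ) - t * Complex.I) * ∑' n : ℕ, V3term k N r t n

/-!
The Taylor coefficients of `H_k` at `0` are `Γ(k+it+m) Γ(k-it+m) / (Γ(2k+m) m!)`, and
`|Γ(σ ± it)| ≤ Γ(σ)` removes `t` from every estimate. The quotient of factorials that remains is
at most `1 / (m + 1)` and at most `4^{1-k} (m+k-1 choose m)`. Summing the logarithmic and the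
binomial series gives `w |H_k(w)| ≤ -log (1 - w)` and `|H_k(w)| ≤ 4 (4 (1 - w))^{-k}`. At
`w = r / (nN + r)`, where `w / (1 - w) = r / (nN)`, they become
`w^k |H_k(w)| ≤ (r / (nN))^{1+δ} / δ` and `w^k |H_k(w)| ≤ 4 (r / (4nN))^k`. Both sum over `n`
against the divisor functions, which are `O(n^η)`; the first bound is used for large `r / N` and
the second for small `r / N`.
-/

section DivisorBound

lemma natCast_add_one_le_max_mul_pow {δ x : ℝ} (hδ : 0 < δ) (hx : 1 + δ ≤ x) (a : ℕ) :
    (a : ℝ) + 1 ≤ max 1 δ⁻¹ * x ^ a := by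
  have h_one : 1 ≤ max 1 δ⁻¹ := le_max_left _ _
  have h_delta : 1 ≤ max 1 δ⁻¹ * δ := by
    rw [← div_le_iff₀ hδ, one_div]
    exact le_max_right _ _
  calc (a : ℝ) + 1 ≤ max 1 δ⁻¹ * (1 + a * δ) := by nlinarith [(a.cast_nonneg : (0 : ℝ) ≤ a)]
    _ ≤ max 1 δ⁻¹ * (1 + δ) ^ a := by gcongr; exact one_add_mul_le_pow (by linarith) a
    _ ≤ max 1 δ⁻¹ * x ^ a := by gcongr

lemma natCast_rpow_eq_prod_primeFactors {n : ℕ} (hn : n ≠ 0) (η : ℝ) :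
    (n : ℝ) ^ η = ∏ p ∈ n.primeFactors, ((p : ℝ) ^ η) ^ n.factorization p := by
  have h_fact : (n : ℝ) = ∏ p ∈ n.primeFactors, (p : ℝ) ^ n.factorization p := by
    conv_lhs => rw [← Nat.prod_factorization_pow_eq_self hn]
    simp [Finsupp.prod]
  conv_lhs => rw [h_fact, ← Real.finsetProd_rpow _ _ fun p _ ↦ by positivity]
  exact Finset.prod_congr rfl fun p _ ↦ (Real.rpow_pow_comm p.cast_nonneg _ _).symm

/- The product over `p ∣ n` of `(v_p(n) + 1) / p ^ (η v_p(n))` is bounded because each factor is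
bounded and only the finitely many primes with `p ^ η < 2` can contribute a factor above `1`. -/
theorem exists_card_divisors_le_mul_rpow {η : ℝ} (hη : 0 < η) :
    ∃ D : ℝ, 0 < D ∧ ∀ n : ℕ, (n.divisors.card : ℝ) ≤ D * (n : ℝ) ^ η := by
  obtain ⟨P, hP⟩ : ∃ P : ℕ, 2 ≤ (P : ℝ) ^ η :=
    (((tendsto_rpow_atTop hη).comp tendsto_natCast_atTop_atTop).eventually_ge_atTop 2).exists
  have h_two : (1 : ℝ) < 2 ^ η := Real.one_lt_rpow one_lt_two hη
  set B : ℝ := max 1 (2 ^ η - 1)⁻¹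
  refine ⟨B ^ P, by positivity, fun n ↦ ?_⟩
  rcases eq_or_ne n 0 with rfl | hn
  · simp [hη.ne']
  have h_factor : ∀ p ∈ n.primeFactors, (n.factorization p : ℝ) + 1 ≤
      (if p < P then B else 1) * ((p : ℝ) ^ η) ^ n.factorization p := by
    intro p hp
    split_ifs with hpP
    · refine natCast_add_one_le_max_mul_pow (by linarith) ?_ _
      have hp2 : (2 : ℝ) ≤ p := mod_cast (Nat.prime_of_mem_primeFactors hp).two_le
      linarith [Real.rpow_le_rpow zero_le_two hp2 hη.le]
    · have hPp : (P : ℝ) ≤ p := mod_cast not_lt.mp hpP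
      simpa using natCast_add_one_le_max_mul_pow one_pos
        (by linarith [Real.rpow_le_rpow P.cast_nonneg hPp hη.le]) (n.factorization p)
  have h_const : ∏ p ∈ n.primeFactors, (if p < P then B else 1) ≤ B ^ P := by
    rw [Finset.prod_ite, Finset.prod_const, Finset.prod_const_one, mul_one]
    refine pow_le_pow_right₀ (le_max_left _ _) ?_
    simpa using Finset.card_le_card (t := Finset.range P)
      fun p hp ↦ Finset.mem_range.2 (Finset.mem_filter.1 hp).2
  rw [Nat.card_divisors hn, natCast_rpow_eq_prod_primeFactors hn]
  push_cast
  calc ∏ p ∈ n.primeFactors, ((n.factorization p : ℝ) + 1)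
      ≤ ∏ p ∈ n.primeFactors, (if p < P then B else 1) * ((p : ℝ) ^ η) ^ n.factorization p :=
        Finset.prod_le_prod (fun p _ ↦ by positivity) h_factor
    _ ≤ B ^ P * ∏ p ∈ n.primeFactors, ((p : ℝ) ^ η) ^ n.factorization p := by
        rw [Finset.prod_mul_distrib]
        gcongr

lemma norm_tauC_le_card_divisors {s : ℂ} (hs : s.re = 0) (n : ℕ) :
    ‖tauC s n‖ ≤ n.divisors.card := by
  suffices h : ∀ d ∈ n.divisors, ‖((d : ℂ) / ((n / d : ℕ) : ℂ)) ^ s‖ ≤ 1 by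
    simpa [tauC] using norm_sum_le_of_le _ h
  intro d hd
  have hd0 : 0 < d := Nat.pos_of_mem_divisors hd
  have hnd : 0 < n / d := Nat.div_pos (Nat.divisor_le hd) hd0
  have h_real : (d : ℂ) / ((n / d : ℕ) : ℂ) = ((d / (n / d : ℕ) : ℝ) : ℂ) := by push_cast; rfl
  rw [h_real, Complex.norm_cpow_eq_rpow_re_of_pos (by positivity), hs, Real.rpow_zero]

end DivisorBound

section Coefficients

open scoped Nat

lemma norm_Gamma_le_Gamma_re {s : ℂ} (hs : 0 < s.re) : ‖Complex.Gamma s‖ ≤ Real.Gamma s.re := by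
  rw [Complex.Gamma_eq_integral hs, Real.Gamma_eq_integral hs, Complex.GammaIntegral]
  refine (MeasureTheory.norm_integral_le_integral_norm _).trans_eq ?_
  refine MeasureTheory.setIntegral_congr_fun measurableSet_Ioi fun x hx ↦ ?_
  simp [Complex.norm_cpow_eq_rpow_re_of_pos hx, -Complex.ofReal_exp, -Complex.ofReal_neg,
    abs_of_pos (Real.exp_pos _)]

lemma norm_Gamma_le_factorial {s : ℂ} {n : ℕ} (hs : s.re = n + 1) : ‖Complex.Gamma s‖ ≤ n ! := by
  rw [← Real.Gamma_nat_eq_factorial, ← hs]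
  exact norm_Gamma_le_Gamma_re (by rw [hs]; positivity)

lemma sq_factorial_add_mul_succ_le (j m : ℕ) :
    (m + j)! ^ 2 * (m + 1) ≤ (m + 2 * j + 1)! * m ! := by
  induction j with
  | zero => exact le_of_eq (by simp only [mul_zero, add_zero, Nat.factorial_succ]; ring)
  | succ j ih =>
    calc (m + j + 1)! ^ 2 * (m + 1) = (m + j + 1) ^ 2 * ((m + j)! ^ 2 * (m + 1)) := by
          rw [Nat.factorial_succ]; ring
      _ ≤ ((m + 2 * j + 3) * (m + 2 * j + 2)) * ((m + 2 * j + 1)! * m !) :=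
          Nat.mul_le_mul (by nlinarith) ih
      _ = (m + 2 * j + 3)! * m ! := by
          rw [Nat.factorial_succ (m + 2 * j + 2), Nat.factorial_succ (m + 2 * j + 1)]; ring

lemma factorial_mul_factorial_add_mul_four_pow_le (j m : ℕ) :
    j ! * (m + j)! * 4 ^ j ≤ (m + 2 * j + 1)! := by
  induction j with
  | zero => simpa using Nat.factorial_le m.le_succ
  | succ j ih =>
    calc (j + 1)! * (m + j + 1)! * 4 ^ (j + 1)
        = (4 * (j + 1) * (m + j + 1)) * (j ! * (m + j)! * 4 ^ j) := by
          rw [Nat.factorial_succ j, Nat.factorial_succ (m + j)]; ring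
      _ ≤ ((m + 2 * j + 3) * (m + 2 * j + 2)) * (m + 2 * j + 1)! :=
          Nat.mul_le_mul (by nlinarith) ih
      _ = (m + 2 * j + 3)! := by
          rw [Nat.factorial_succ (m + 2 * j + 2), Nat.factorial_succ (m + 2 * j + 1)]; ring

lemma sq_factorial_add_mul_four_pow_le (j m : ℕ) :
    (m + j)! ^ 2 * 4 ^ j ≤ (m + j).choose j * ((m + 2 * j + 1)! * m !) := by
  calc (m + j)! ^ 2 * 4 ^ j
      = (m + j).choose j * m ! * (j ! * (m + j)! * 4 ^ j) := by
        nth_rw 1 [sq, ← Nat.add_choose_mul_factorial_mul_factorial m j]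
        ring
    _ ≤ (m + j).choose j * m ! * (m + 2 * j + 1)! :=
        Nat.mul_le_mul_left _ (factorial_mul_factorial_add_mul_four_pow_le j m)
    _ = (m + j).choose j * ((m + 2 * j + 1)! * m !) := by ring

/-- The `m`-th Taylor coefficient of `H_k` at `0`, as identified by `Hfun_eq_tsum`. -/
noncomputable def HfunCoeff (k : ℕ) (t : ℝ) (m : ℕ) : ℂ :=
  Complex.Gamma (k + t * Complex.I + m) * Complex.Gamma (k - t * Complex.I + m) /
    (Complex.Gamma (2 * k + m) * m !)

lemma Hfun_eq_tsum {k : ℕ} (hk : 1 ≤ k) (t w : ℝ) :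
    Hfun k t w = ∑' m, HfunCoeff k t m * (w : ℂ) ^ m := by
  have hk0 : (0 : ℝ) < k := mod_cast hk
  have h_minus : Complex.Gamma (k - t * Complex.I) ≠ 0 :=
    Complex.Gamma_ne_zero_of_re_pos (by simpa using hk0)
  have h_plus : Complex.Gamma (k + t * Complex.I) ≠ 0 :=
    Complex.Gamma_ne_zero_of_re_pos (by simpa using hk0)
  have h_two : Complex.Gamma (2 * k) ≠ 0 :=
    Complex.Gamma_ne_zero_of_re_pos (by simpa using hk0)
  rw [Hfun, hyp2F1, ← mul_assoc, mul_comm (Complex.Gamma (k + _)),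
    div_mul_div_cancel₀ h_two, div_self (mul_ne_zero h_minus h_plus), one_mul]
  refine tsum_congr fun m ↦ ?_
  rw [HfunCoeff]
  ring

lemma norm_HfunCoeff_succ_le (j : ℕ) (t : ℝ) (m : ℕ) :
    ‖HfunCoeff (j + 1) t m‖ ≤ ((m + j)! : ℝ) ^ 2 / ((m + 2 * j + 1)! * m !) := by
  have h_plus : ‖Complex.Gamma ((j + 1 : ℕ) + t * Complex.I + m)‖ ≤ (m + j)! :=
    norm_Gamma_le_factorial (by simp; ring)
  have h_minus : ‖Complex.Gamma ((j + 1 : ℕ) - t * Complex.I + m)‖ ≤ (m + j)! :=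
    norm_Gamma_le_factorial (by simp; ring)
  have h_denom : Complex.Gamma (2 * (j + 1 : ℕ) + m) = ((m + 2 * j + 1)! : ℂ) := by
    rw [← Complex.Gamma_nat_eq_factorial]
    congr 1
    push_cast
    ring
  rw [HfunCoeff, h_denom, norm_div, norm_mul, norm_mul, Complex.norm_natCast,
    Complex.norm_natCast, sq]
  gcongr

lemma norm_HfunCoeff_le_one_div {k : ℕ} (hk : 1 ≤ k) (t : ℝ) (m : ℕ) :
    ‖HfunCoeff k t m‖ ≤ 1 / ((m : ℝ) + 1) := by
  obtain ⟨j, rfl⟩ := Nat.exists_eq_add_of_le' hk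
  refine (norm_HfunCoeff_succ_le j t m).trans ?_
  rw [div_le_div_iff₀ (by positivity) (by positivity), one_mul]
  exact_mod_cast sq_factorial_add_mul_succ_le j m

lemma norm_HfunCoeff_succ_le_choose_div (j : ℕ) (t : ℝ) (m : ℕ) :
    ‖HfunCoeff (j + 1) t m‖ ≤ (m + j).choose j / 4 ^ j := by
  refine (norm_HfunCoeff_succ_le j t m).trans ?_
  rw [div_le_div_iff₀ (by positivity) (by positivity)]
  exact_mod_cast sq_factorial_add_mul_four_pow_le j m

end Coefficients

section HfunBounds

variable {k : ℕ} (t : ℝ) {w : ℝ}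

lemma norm_Hfun_le_of_hasSum (hk : 1 ≤ k) (hw : 0 ≤ w) {c : ℕ → ℝ} {S : ℝ}
    (hc : ∀ m, ‖HfunCoeff k t m‖ ≤ c m) (hS : HasSum (fun m ↦ c m * w ^ m) S) :
    ‖Hfun k t w‖ ≤ S := by
  rw [Hfun_eq_tsum hk]
  refine tsum_of_norm_bounded hS fun m ↦ ?_
  rw [norm_mul, norm_pow, Complex.norm_of_nonneg hw]
  gcongr
  exact hc m

lemma norm_Hfun_le_neg_log_div (hk : 1 ≤ k) (hw : 0 < w) (hw1 : w < 1) :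
    ‖Hfun k t w‖ ≤ -Real.log (1 - w) / w := by
  refine norm_Hfun_le_of_hasSum t hk hw.le (norm_HfunCoeff_le_one_div hk t) ?_
  convert! (Real.hasSum_pow_div_log_of_abs_lt_one (abs_lt.2 ⟨by linarith, hw1⟩)).div_const w
    using 1
  ext m
  rw [pow_succ]
  field_simp

lemma norm_Hfun_le_four_div_pow (hk : 1 ≤ k) (hw : 0 ≤ w) (hw1 : w < 1) :
    ‖Hfun k t w‖ ≤ 4 / (4 * (1 - w)) ^ k := by
  obtain ⟨j, rfl⟩ := Nat.exists_eq_add_of_le' hk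
  refine norm_Hfun_le_of_hasSum t hk hw (norm_HfunCoeff_succ_le_choose_div j t) ?_
  have h_binom := hasSum_choose_mul_geometric_of_norm_lt_one j (r := w)
    (by rwa [Real.norm_of_nonneg hw])
  convert! h_binom.div_const (4 ^ j) using 1
  · ext m
    ring
  · have : 1 - w ≠ 0 := by linarith
    rw [mul_pow, pow_succ 4]
    field_simp

lemma log_one_add_le_rpow_div {x δ : ℝ} (hx : 0 ≤ x) (hδ : 0 < δ) (hδ1 : δ ≤ 1) :
    Real.log (1 + x) ≤ x ^ δ / δ := by
  have h_pow : (1 + x) ^ δ ≤ 1 + x ^ δ := by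
    simpa using Real.rpow_add_le_add_rpow zero_le_one hx hδ.le hδ1
  rw [le_div_iff₀ hδ, mul_comm, ← Real.log_rpow (by positivity)]
  linarith [Real.log_le_sub_one_of_pos (show 0 < (1 + x) ^ δ by positivity)]

variable {y r : ℝ}

lemma pow_mul_norm_Hfun_le_rpow (hk : 2 ≤ k) (hy : 0 < y) (hr : 0 < r) {δ : ℝ} (hδ : 0 < δ)
    (hδ1 : δ ≤ 1) :
    (r / (y + r)) ^ k * ‖Hfun k t (r / (y + r))‖ ≤ (r / y) ^ (1 + δ) / δ := by
  have h_log : -Real.log (1 - r / (y + r)) = Real.log (1 + r / y) := by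
    rw [← Real.log_inv]
    congr 1
    have : y ≠ 0 := hy.ne'
    field_simp
    simp [this]
  set w := r / (y + r)
  have hw : 0 < w := by positivity
  have hw1 : w < 1 := (div_lt_one (by positivity)).2 (by linarith)
  have hwx : w ≤ r / y := div_le_div_of_nonneg_left hr.le hy (by linarith)
  calc w ^ k * ‖Hfun k t w‖ ≤ w ^ 2 * (-Real.log (1 - w) / w) := by
        gcongr ?_ * ?_
        · exact pow_le_pow_of_le_one hw.le hw1.le hk
        · exact norm_Hfun_le_neg_log_div t (by omega) hw hw1
    _ = w * Real.log (1 + r / y) := by rw [h_log]; field_simp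
    _ ≤ (r / y) * ((r / y) ^ δ / δ) := by
        gcongr
        · exact Real.log_nonneg (by linarith)
        · exact log_one_add_le_rpow_div (by positivity) hδ hδ1
    _ = (r / y) ^ (1 + δ) / δ := by rw [Real.rpow_one_add' (by positivity) (by positivity)]; ring

lemma pow_mul_norm_Hfun_le_pow (hk : 1 ≤ k) (hy : 0 < y) (hr : 0 ≤ r) :
    (r / (y + r)) ^ k * ‖Hfun k t (r / (y + r))‖ ≤ 4 * (r / (4 * y)) ^ k := by
  calc (r / (y + r)) ^ k * ‖Hfun k t (r / (y + r))‖
      ≤ (r / (y + r)) ^ k * (4 / (4 * (1 - r / (y + r))) ^ k) := by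
        gcongr
        exact norm_Hfun_le_four_div_pow t hk (by positivity)
          ((div_lt_one (by positivity)).2 (by linarith))
    _ = 4 * (r / (4 * y)) ^ k := by
        have h_compl : 1 - r / (y + r) = y / (y + r) := by field_simp; ring
        rw [h_compl, mul_div_left_comm, ← div_pow]
        congr 2
        field_simp

end HfunBounds

section Series

variable {k N r : ℕ} {t : ℝ}

lemma norm_V3term (n : ℕ) :
    ‖V3term k N r t n‖ = (n + 1).divisors.card * ‖tauC (t * Complex.I) ((n + 1) * N + r)‖ /
      (((n : ℝ) + 1) * N + r) ^ k * ‖Hfun k t (r / (((n : ℝ) + 1) * N + r))‖ := by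
  simp only [V3term, Complex.cpow_natCast, norm_mul, norm_div, norm_pow, Complex.norm_natCast]
  push_cast
  rfl

lemma norm_V3 (hr : 0 < r) : ‖V3 k N r t‖ = (r : ℝ) ^ k * ‖∑' n, V3term k N r t n‖ := by
  simp [V3, Complex.norm_natCast_cpow_of_pos hr]

lemma summable_V3term_of_le (hr : 0 < r) {f : ℕ → ℝ} (hf : Summable f)
    (h : ∀ n, (r : ℝ) ^ k * ‖V3term k N r t n‖ ≤ f n) : Summable (V3term k N r t) := by
  refine .of_norm_bounded (hf.div_const ((r : ℝ) ^ k)) fun n ↦ ?_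
  rw [le_div_iff₀' (by positivity)]
  exact h n

lemma norm_V3_le_of_hasSum (hr : 0 < r) {f : ℕ → ℝ} {S : ℝ} (hf : HasSum f S)
    (h : ∀ n, (r : ℝ) ^ k * ‖V3term k N r t n‖ ≤ f n) : ‖V3 k N r t‖ ≤ S := by
  rw [norm_V3 hr, ← le_div_iff₀' (by positivity)]
  refine tsum_of_norm_bounded (hf.div_const ((r : ℝ) ^ k)) fun n ↦ ?_
  rw [le_div_iff₀' (by positivity)]
  exact h n

variable {D η : ℝ}

lemma pow_mul_norm_V3term_le (hD : ∀ n : ℕ, (n.divisors.card : ℝ) ≤ D * (n : ℝ) ^ η)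
    (hη : 0 ≤ η) (n : ℕ) :
    (r : ℝ) ^ k * ‖V3term k N r t n‖ ≤ D ^ 2 * ((N : ℝ) + r) ^ η * ((n : ℝ) + 1) ^ (2 * η) *
      (((r : ℝ) / (((n : ℝ) + 1) * N + r)) ^ k *
        ‖Hfun k t (r / (((n : ℝ) + 1) * N + r))‖) := by
  have hD0 : 0 ≤ D := by simpa using (Nat.cast_nonneg _).trans (hD 1)
  have h_left : ((n + 1).divisors.card : ℝ) ≤ D * ((n : ℝ) + 1) ^ η := mod_cast hD (n + 1)
  have h_right : ‖tauC (t * Complex.I) ((n + 1) * N + r)‖ ≤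
      D * (((n : ℝ) + 1) ^ η * ((N : ℝ) + r) ^ η) := by
    refine (norm_tauC_le_card_divisors (by simp) _).trans ((hD _).trans ?_)
    rw [← Real.mul_rpow (by positivity) (by positivity)]
    push_cast
    gcongr
    nlinarith [(by positivity : (0 : ℝ) ≤ n * r)]
  rw [norm_V3term]
  set X : ℝ := ((n : ℝ) + 1) * N + r
  calc (r : ℝ) ^ k * ((n + 1).divisors.card * ‖tauC (t * Complex.I) ((n + 1) * N + r)‖ / X ^ k *
        ‖Hfun k t (r / X)‖)
      = (n + 1).divisors.card * ‖tauC (t * Complex.I) ((n + 1) * N + r)‖ *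
          ((r / X) ^ k * ‖Hfun k t (r / X)‖) := by rw [div_pow]; ring
    _ ≤ (D * ((n : ℝ) + 1) ^ η) * (D * (((n : ℝ) + 1) ^ η * ((N : ℝ) + r) ^ η)) *
          ((r / X) ^ k * ‖Hfun k t (r / X)‖) := by gcongr
    _ = D ^ 2 * ((N : ℝ) + r) ^ η * ((n : ℝ) + 1) ^ (2 * η) *
          ((r / X) ^ k * ‖Hfun k t (r / X)‖) := by
        rw [two_mul, Real.rpow_add (by positivity)]; ring

lemma pow_mul_norm_V3term_le_rpow (hD : ∀ n : ℕ, (n.divisors.card : ℝ) ≤ D * (n : ℝ) ^ η)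
    (hk : 2 ≤ k) (hN : 0 < N) (hr : 0 < r) (hη : 0 < η) (hη1 : 3 * η ≤ 1) (n : ℕ) :
    (r : ℝ) ^ k * ‖V3term k N r t n‖ ≤
      D ^ 2 / (3 * η) * ((N : ℝ) + r) ^ η * ((r : ℝ) / N) ^ (1 + 3 * η) *
        ((n : ℝ) + 1) ^ (-1 - η) := by
  have h_pow : ((n : ℝ) + 1) ^ (2 * η) * ((r : ℝ) / (((n : ℝ) + 1) * N)) ^ (1 + 3 * η) =
      ((r : ℝ) / N) ^ (1 + 3 * η) * ((n : ℝ) + 1) ^ (-1 - η) := by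
    rw [mul_comm ((n : ℝ) + 1) (N : ℝ), ← div_div,
      Real.div_rpow (by positivity) (by positivity),
      show -1 - η = 2 * η - (1 + 3 * η) by ring, Real.rpow_sub (by positivity)]
    ring
  calc (r : ℝ) ^ k * ‖V3term k N r t n‖
      ≤ D ^ 2 * ((N : ℝ) + r) ^ η * ((n : ℝ) + 1) ^ (2 * η) *
          (((r : ℝ) / (((n : ℝ) + 1) * N)) ^ (1 + 3 * η) / (3 * η)) := by
        refine (pow_mul_norm_V3term_le hD hη.le n).trans ?_
        gcongr ?_ * ?_
        exact pow_mul_norm_Hfun_le_rpow t hk (by positivity) (by positivity) (by positivity) hη1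
    _ = D ^ 2 / (3 * η) * ((N : ℝ) + r) ^ η *
          (((n : ℝ) + 1) ^ (2 * η) * ((r : ℝ) / (((n : ℝ) + 1) * N)) ^ (1 + 3 * η)) := by ring
    _ = _ := by rw [h_pow, mul_assoc _ (((r : ℝ) / N) ^ _)]

lemma pow_mul_norm_V3term_le_pow (hD : ∀ n : ℕ, (n.divisors.card : ℝ) ≤ D * (n : ℝ) ^ η)
    (hk : 2 ≤ k) (hN : 0 < N) (hη : 0 ≤ η) (hη1 : 3 * η ≤ 1) (n : ℕ) :
    (r : ℝ) ^ k * ‖V3term k N r t n‖ ≤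
      4 * D ^ 2 * ((N : ℝ) + r) ^ η * ((r : ℝ) / (4 * N)) ^ k * ((n : ℝ) + 1) ^ (-1 - η) := by
  have hn : (1 : ℝ) ≤ (n : ℝ) + 1 := by simp
  have h_decay : ((n : ℝ) + 1) ^ (2 * η) / ((n : ℝ) + 1) ^ k ≤ ((n : ℝ) + 1) ^ (-1 - η) := by
    have hk' : (2 : ℝ) ≤ k := mod_cast hk
    rw [← Real.rpow_natCast, ← Real.rpow_sub (by positivity)]
    exact Real.rpow_le_rpow_of_exponent_le hn (by linarith)
  calc (r : ℝ) ^ k * ‖V3term k N r t n‖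
      ≤ D ^ 2 * ((N : ℝ) + r) ^ η * ((n : ℝ) + 1) ^ (2 * η) *
          (4 * ((r : ℝ) / (4 * (((n : ℝ) + 1) * N))) ^ k) := by
        refine (pow_mul_norm_V3term_le hD hη n).trans ?_
        gcongr ?_ * ?_
        exact pow_mul_norm_Hfun_le_pow t (by omega) (by positivity) (by positivity)
    _ = 4 * D ^ 2 * ((N : ℝ) + r) ^ η * ((r : ℝ) / (4 * N)) ^ k *
          (((n : ℝ) + 1) ^ (2 * η) / ((n : ℝ) + 1) ^ k) := by
        rw [mul_left_comm (4 : ℝ), mul_comm ((n : ℝ) + 1), ← div_div, div_pow]; ring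
    _ ≤ _ := by gcongr

end Series

theorem exists_norm_V3_le {η : ℝ} (hη : 0 < η) (hη1 : 3 * η ≤ 1) :
    ∃ C : ℝ, 0 < C ∧ ∀ (k N r : ℕ) (t : ℝ), 2 ≤ k → 1 ≤ N → 1 ≤ r →
      Summable (V3term k N r t) ∧
      ‖V3 k N r t‖ ≤ C * ((N : ℝ) + r) ^ η * ((r : ℝ) / N) ^ (1 + 3 * η) ∧
      ‖V3 k N r t‖ ≤ C * ((N : ℝ) + r) ^ η * ((r : ℝ) / (4 * N)) ^ k := by
  obtain ⟨D, hD0, hD⟩ := exists_card_divisors_le_mul_rpow hη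
  have h_summable : Summable fun n : ℕ ↦ ((n : ℝ) + 1) ^ (-1 - η) := by
    simpa using (summable_nat_add_iff 1).2 (Real.summable_nat_rpow (p := -1 - η) |>.2 (by linarith))
  obtain ⟨S, hS⟩ := h_summable
  have hS0 : 0 ≤ S := hS.nonneg fun n ↦ by positivity
  refine ⟨(D ^ 2 / (3 * η) + 4 * D ^ 2) * (S + 1), by positivity, fun k N r t hk hN hr ↦ ?_⟩
  have h_rpow := pow_mul_norm_V3term_le_rpow hD hk hN hr hη hη1 (t := t)
  have h_pow := pow_mul_norm_V3term_le_pow hD hk hN hη.le hη1 (r := r) (t := t)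
  refine ⟨summable_V3term_of_le hr (hS.mul_left _).summable h_rpow,
    (norm_V3_le_of_hasSum hr (hS.mul_left _) h_rpow).trans ?_,
    (norm_V3_le_of_hasSum hr (hS.mul_left _) h_pow).trans ?_⟩
  · calc D ^ 2 / (3 * η) * ((N : ℝ) + r) ^ η * ((r : ℝ) / N) ^ (1 + 3 * η) * S
        = D ^ 2 / (3 * η) * S * ((N : ℝ) + r) ^ η * ((r : ℝ) / N) ^ (1 + 3 * η) := by ring
      _ ≤ _ := by
        gcongr
        · exact le_add_of_nonneg_right (by positivity)
        · linarith
  · calc 4 * D ^ 2 * ((N : ℝ) + r) ^ η * ((r : ℝ) / (4 * N)) ^ k * S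
        = 4 * D ^ 2 * S * ((N : ℝ) + r) ^ η * ((r : ℝ) / (4 * N)) ^ k := by ring
      _ ≤ _ := by
        gcongr
        · exact le_add_of_nonneg_left (by positivity)
        · linarith

section Regimes

variable {N r η ε : ℝ}

lemma mul_rpow_le_mul_rpow_of_one_le {c x : ℝ} (hc : 1 ≤ c) (hx : 1 ≤ x) (hη1 : η ≤ 1)
    (hηε : η ≤ ε) : (c * x) ^ η ≤ c * x ^ ε := by
  rw [Real.mul_rpow (by linarith) (by linarith)]
  gcongr
  exact Real.rpow_le_self_of_one_le hc hη1

lemma add_rpow_mul_div_rpow_le {X : ℝ} (hX : 1 ≤ X) (hN : 1 ≤ N) (hr : 1 ≤ r)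
    (hη : 0 ≤ η) (hη1 : η ≤ 1) (hηε : 4 * η ≤ ε) (h : N / (1 + X) ≤ r) :
    (N + r) ^ η * (r / N) ^ (1 + 3 * η) ≤ 3 * (r * X) ^ ε * (r / N) := by
  rw [div_le_iff₀ (by positivity)] at h
  have hrX : r ≤ r * X := le_mul_of_one_le_right (by linarith) hX
  have h_add : (N + r) ^ η ≤ 3 * (r * X) ^ η :=
    (Real.rpow_le_rpow (by positivity) (by linarith) hη).trans
      (mul_rpow_le_mul_rpow_of_one_le (by norm_num) (by linarith) hη1 le_rfl)
  have h_div : (r / N) ^ (1 + 3 * η) ≤ (r / N) * (r * X) ^ (3 * η) := by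
    rw [Real.rpow_one_add' (by positivity) (by positivity)]
    gcongr
    exact (div_le_self (by linarith) hN).trans hrX
  calc (N + r) ^ η * (r / N) ^ (1 + 3 * η)
      ≤ (3 * (r * X) ^ η) * ((r / N) * (r * X) ^ (3 * η)) := by gcongr
    _ = 3 * (r * X) ^ (4 * η) * (r / N) := by
        rw [show 4 * η = η + 3 * η by ring, Real.rpow_add (by positivity)]; ring
    _ ≤ 3 * (r * X) ^ ε * (r / N) := by gcongr; linarith

lemma add_rpow_mul_div_four_mul_pow_le (hN : 1 ≤ N) (hr : 0 ≤ r) (hη : 0 ≤ η) (hη1 : η ≤ 1)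
    (hηε : η ≤ ε) (h : r ≤ N) (k : ℕ) :
    (N + r) ^ η * (r / (4 * N)) ^ k ≤ 2 * (r / (2 * (N + r))) ^ k * N ^ ε := by
  have h_add : (N + r) ^ η ≤ 2 * N ^ ε :=
    (Real.rpow_le_rpow (by positivity) (by linarith) hη).trans
      (mul_rpow_le_mul_rpow_of_one_le one_le_two hN hη1 hηε)
  calc (N + r) ^ η * (r / (4 * N)) ^ k
      ≤ (2 * N ^ ε) * (r / (2 * (N + r))) ^ k := by gcongr ?_ * (_ / ?_) ^ k; linarith
    _ = 2 * (r / (2 * (N + r))) ^ k * N ^ ε := by ring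

end Regimes

theorem V3_bound_general (ε : ℝ) (hε : 0 < ε) :
    ∃ C : ℝ, 0 < C ∧ ∀ (k N r : ℕ) (t T : ℝ), 2 ≤ k → 1 ≤ N → 1 ≤ r → 1 ≤ T →
      Summable (V3term k N r t) ∧
      ((N : ℝ) / (1 + T ^ 2) ≤ (r : ℝ) →
        ‖V3 k N r t‖ ≤ C * ((r : ℝ) * T ^ 2) ^ ε * ((r : ℝ) / N)) ∧
      ((r : ℝ) < (N : ℝ) / (1 + T ^ 2) →
        ‖V3 k N r t‖ ≤ C * ((r : ℝ) / (2 * ((N : ℝ) + r))) ^ k * (N : ℝ) ^ ε) := by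
  obtain ⟨η, hη, hη1, hηε⟩ : ∃ η : ℝ, 0 < η ∧ 3 * η ≤ 1 ∧ 4 * η ≤ ε :=
    ⟨min ε 1 / 4, by positivity, by linarith [min_le_right ε 1], by linarith [min_le_left ε 1]⟩
  obtain ⟨C, hC, hV3⟩ := exists_norm_V3_le hη hη1
  refine ⟨3 * C, by positivity, fun k N r t T hk hN hr hT ↦ ?_⟩
  obtain ⟨h_summable, h_rpow, h_pow⟩ := hV3 k N r t hk hN hr
  have hN' : (1 : ℝ) ≤ N := mod_cast hN
  have hr' : (1 : ℝ) ≤ r := mod_cast hr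
  refine ⟨h_summable, fun h ↦ h_rpow.trans ?_, fun h ↦ h_pow.trans ?_⟩
  · have := add_rpow_mul_div_rpow_le (one_le_pow₀ hT) hN' hr' hη.le (by linarith) hηε h
    linarith [mul_le_mul_of_nonneg_left this hC.le]
  · have hrN : (r : ℝ) ≤ N := h.le.trans (div_le_self (by linarith) (by nlinarith))
    have := add_rpow_mul_div_four_mul_pow_le hN' (by linarith) hη.le (by linarith)
      (by linarith : η ≤ ε) hrN k
    have h_nonneg : 0 ≤ C * ((r : ℝ) / (2 * (N + r))) ^ k * (N : ℝ) ^ ε := by positivity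
    linarith [mul_le_mul_of_nonneg_left this hC.le]

/-- For every `ε > 0` there is `C_ε > 0` such that for all integers `k ≥ 2`, `N ≥ 1`, `r ≥ 1`
and all real `t` (with `T = 3 + |t|`), the sum defining `V_{N,3}(r)` converges absolutely and:
`|V_{N,3}(r)| ≤ C_ε (rT²)^ε r/N` if `r ≥ N/(1+T²)`, while
`|V_{N,3}(r)| ≤ C_ε (r/(2(N+r)))^k N^ε` if `r < N/(1+T²)`. -/
theorem V3_bound (ε : ℝ) (hε : 0 < ε) :
    ∃ C : ℝ, 0 < C ∧ ∀ (k N r : ℕ) (t : ℝ), 2 ≤ k → 1 ≤ N → 1 ≤ r →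
      Summable (V3term k N r t) ∧
      ((N : ℝ) / (1 + (3 + |t|) ^ 2) ≤ (r : ℝ) →
        ‖V3 k N r t‖ ≤ C * ((r : ℝ) * (3 + |t|) ^ 2) ^ ε * ((r : ℝ) / N)) ∧
      ((r : ℝ) < (N : ℝ) / (1 + (3 + |t|) ^ 2) →
        ‖V3 k N r t‖ ≤ C * ((r : ℝ) / (2 * ((N : ℝ) + r))) ^ k * (N : ℝ) ^ ε) := by
  obtain ⟨C, hC, h⟩ := V3_bound_general ε hε
  exact ⟨C, hC, fun k N r t hk hN hr ↦ h k N r t _ hk hN hr (by linarith [abs_nonneg t])⟩
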